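/- Fix integers n ≥ 2 and r ≥ 1, a commutative ring R, n-tuples (A_1,…,A_n) and (α_1,…,α_n) of r×r matrices over R, and scalars λ, ξ ∈ R. With X_i(λ) = Σ_{k=1}^{i−1}[A_k, α_k − α_i] + [A_i, (i−1−λ)·α_i + Σ_{k=i+1}^{n} α_k] and L_a(λ) = (λ−a+2)·A_a + Σ_{k=1}^{a−1} A_k (for 2 ≤ a ≤ n), one has Tr( adjugate(ξ·I − L_a(λ)) · ((λ−a+2)·X_a(λ) + Σ_{j=1}^{a−1} X_j(λ)) ) = 0. Since Tr(adjugate(ξ·I − L_a(λ))·N) is the directional derivative of det(ξ·I − L_a(λ)) in the direction N of the Lax matrix, this says that all coefficients of the characteristic polynomial of every Lax matrix L_a(λ) are Casimir functions of the Poisson pencil R − λP. -/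

import Mathlib

open Finset

/-!
The Lax matrix `L_a(λ)` depends linearly on `(A_1, …, A_n)`, so its derivative along the Hamiltonian
vector field `X(λ)` is `L_a(λ)` with every `A_k` replaced by `X_k(λ)`. It satisfies the Lax equation
`L̇_a = [L_a, M_a]` with `M_a = (a − 1 − λ) α_a + ∑_{k > a} α_k`, valid in any Lie algebra. As
`adj (ξ − L_a)` commutes with `L_a`, its product with `[L_a, M_a]` has trace zero.
-/

namespace Gaudin

section LaxEquation

variable {R 𝔤 : Type*} [CommRing R] [LieRing 𝔤] [LieAlgebra R 𝔤]

/-- The element `(m - 1 - λ) α_k + ∑_{l > m} α_l` paired with `A_k` in the sum of the first `m`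
components of the Hamiltonian vector field. For `k = m` it is the second factor of the last bracket
in `X_m(λ)`, and the second matrix of the Lax pair of `L_m(λ)`. -/
def pencilGradient (n : ℕ) (lam : R) (α : ℕ → 𝔤) (m k : ℕ) : 𝔤 :=
  ((m : R) - 1 - lam) • α k + ∑ l ∈ Icc (m + 1) n, α l

/-- The `i`-th component `X_i(λ)` of the Hamiltonian vector field of the pencil `R - λP`, at the
point `A` and for the gradient `α`. Sites are numbered from `1` to `n`; other values of `A` and `α`
are irrelevant. -/
def pencilField (n : ℕ) (lam : R) (A α : ℕ → 𝔤) (i : ℕ) : 𝔤 :=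
  ∑ k ∈ Icc 1 (i - 1), ⁅A k, α k - α i⁆ + ⁅A i, pencilGradient n lam α i i⁆

/-- The Lax matrix `L_a(λ)` at the point `A`. Being linear in `A`, it is also the derivative of
`L_a(λ)` in the direction `X` when evaluated at `X`. -/
def lax (lam : R) (A : ℕ → 𝔤) (a : ℕ) : 𝔤 :=
  (lam - (a : R) + 2) • A a + ∑ k ∈ Icc 1 (a - 1), A k

theorem pencilGradient_succ {n m : ℕ} (hm : m < n) (lam : R) (α : ℕ → 𝔤) (k : ℕ) :
    pencilGradient n lam α (m + 1) k = pencilGradient n lam α m k + (α k - α (m + 1)) := by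
  have tail : ∑ l ∈ Icc (m + 1) n, α l = α (m + 1) + ∑ l ∈ Icc (m + 1 + 1) n, α l := by
    rw [← insert_Icc_add_one_left_eq_Icc hm, sum_insert (by simp)]
  simp only [pencilGradient, tail]
  push_cast
  module

theorem pencilGradient_succ_self {n m : ℕ} (hm : m < n) (lam : R) (α : ℕ → 𝔤) (k : ℕ) :
    pencilGradient n lam α (m + 1) (m + 1) =
      pencilGradient n lam α m k + (lam - ((m + 1 : ℕ) : R) + 2) • (α k - α (m + 1)) := by
  have change_site : pencilGradient n lam α (m + 1) (m + 1) =
      pencilGradient n lam α (m + 1) k - ((m : R) - lam) • (α k - α (m + 1)) := by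
    simp only [pencilGradient]
    push_cast
    module
  rw [change_site, pencilGradient_succ hm]
  push_cast
  module

theorem sum_pencilField {n m : ℕ} (hm : m ≤ n) (lam : R) (A α : ℕ → 𝔤) :
    ∑ j ∈ Icc 1 m, pencilField n lam A α j =
      ∑ k ∈ Icc 1 m, ⁅A k, pencilGradient n lam α m k⁆ := by
  induction m with
  | zero => simp
  | succ m ih =>
    rw [sum_Icc_succ_top (by lia), sum_Icc_succ_top (by lia), ih (by lia), pencilField,
      add_tsub_cancel_right, ← add_assoc, ← sum_add_distrib]
    simp only [pencilGradient_succ hm, lie_add]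

theorem lax_pencilField {n a : ℕ} (ha : 1 ≤ a) (han : a ≤ n) (lam : R) (A α : ℕ → 𝔤) :
    lax lam (pencilField n lam A α) a = ⁅lax lam A a, pencilGradient n lam α a a⁆ := by
  obtain ⟨m, rfl⟩ := Nat.exists_eq_add_of_le' ha
  set c : R := lam - ((m + 1 : ℕ) : R) + 2
  set M : 𝔤 := pencilGradient n lam α (m + 1) (m + 1) with hM
  have bracket_site (k : ℕ) :
      c • ⁅A k, α k - α (m + 1)⁆ + ⁅A k, pencilGradient n lam α m k⁆ = ⁅A k, M⁆ := by
    rw [hM, pencilGradient_succ_self han lam α k, lie_add, lie_smul, add_comm]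
  calc lax lam (pencilField n lam A α) (m + 1)
      = c • (∑ k ∈ Icc 1 m, ⁅A k, α k - α (m + 1)⁆ + ⁅A (m + 1), M⁆)
          + ∑ k ∈ Icc 1 m, ⁅A k, pencilGradient n lam α m k⁆ := by
        rw [lax, add_tsub_cancel_right, sum_pencilField (by lia), pencilField,
          add_tsub_cancel_right]
    _ = c • ⁅A (m + 1), M⁆ + ∑ k ∈ Icc 1 m, ⁅A k, M⁆ := by
        simp only [← bracket_site, sum_add_distrib, smul_add, smul_sum]
        abel
    _ = ⁅lax lam A (m + 1), M⁆ := by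
        rw [lax, add_tsub_cancel_right, add_lie, smul_lie, sum_lie]

end LaxEquation

section Trace

variable {ι R : Type*} [Fintype ι] [CommRing R]

theorem trace_mul_lie_of_commute {C L : Matrix ι ι R} (h : Commute C L) (B : Matrix ι ι R) :
    (C * ⁅L, B⁆).trace = 0 := by
  rw [Ring.lie_def, mul_sub, Matrix.trace_sub, ← mul_assoc, ← mul_assoc,
    Matrix.trace_mul_cycle C B L, h.eq, sub_self]

variable [DecidableEq ι]

theorem commute_adjugate (N : Matrix ι ι R) : Commute N.adjugate N :=
  N.adjugate_mul.trans N.mul_adjugate.symm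

theorem commute_adjugate_smul_one_sub (ξ : R) (L : Matrix ι ι R) :
    Commute (ξ • (1 : Matrix ι ι R) - L).adjugate L := by
  have scalar : Commute (ξ • (1 : Matrix ι ι R) - L).adjugate (ξ • 1) :=
    (Commute.one_right _).smul_right ξ
  simpa using scalar.sub_right (commute_adjugate (ξ • 1 - L))

end Trace

end Gaudin

attribute [local instance] LieRing.ofAssociativeRing

theorem gaudin_charpoly_casimir_general {ι R : Type*} [Fintype ι] [DecidableEq ι] [CommRing R]
    {n a : ℕ} (ha : 1 ≤ a) (han : a ≤ n) (A α : ℕ → Matrix ι ι R) (lam ξ : R) :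
    ((ξ • (1 : Matrix ι ι R) - Gaudin.lax lam A a).adjugate *
      Gaudin.lax lam (Gaudin.pencilField n lam A α) a).trace = 0 := by
  rw [Gaudin.lax_pencilField ha han]
  exact Gaudin.trace_mul_lie_of_commute (Gaudin.commute_adjugate_smul_one_sub ξ _) _

/-- All coefficients of the characteristic polynomial of every Lax matrix
`L_a(λ)` are Casimirs of the Poisson pencil `R − λP` of the homogeneous `sl(r)`
Gaudin model: the directional derivative of `det(ξ·I − L_a(λ))` along the
pencil's Hamiltonian vector field vanishes. -/
theorem gaudin_charpoly_casimir (n r : ℕ) (hn : 2 ≤ n) (hr : 1 ≤ r)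
    (R : Type*) [CommRing R]
    (A α : ℕ → Matrix (Fin r) (Fin r) R) (lam ξ : R)
    (X : ℕ → Matrix (Fin r) (Fin r) R)
    (hX : ∀ i, X i =
      ∑ k ∈ Icc 1 (i - 1), (A k * (α k - α i) - (α k - α i) * A k)
      + (A i * (((i : R) - 1 - lam) • α i + ∑ k ∈ Icc (i + 1) n, α k)
         - (((i : R) - 1 - lam) • α i + ∑ k ∈ Icc (i + 1) n, α k) * A i))
    (a : ℕ) (ha2 : 2 ≤ a) (han : a ≤ n) :
    Matrix.trace
      (Matrix.adjugate
          (ξ • (1 : Matrix (Fin r) (Fin r) R)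
            - ((lam - (a : R) + 2) • A a + ∑ k ∈ Icc 1 (a - 1), A k))
        * ((lam - (a : R) + 2) • X a + ∑ j ∈ Icc 1 (a - 1), X j)) = 0 := by
  obtain rfl : X = Gaudin.pencilField n lam A α := funext hX
  exact gaudin_charpoly_casimir_general (one_le_two.trans ha2) han A α lam ξ
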